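/- Let P be a normal logic program over atoms a_1, …, a_n, let ⊗ be a t-norm and ⊕ a t-conorm, and let τ, φ ∈ {0,1}^n be binary degree vectors. Let T = [τ] and F = [φ] be the induced atom sets. Then the set induced by one application of the soft immediate consequence operator equals one application of the classical immediate consequence operator: [𝒞_{P,φ}(τ)] = C_{P,𝒜∖F}(T). -/

import Mathlib

instance : Fact ((0:ℝ) ≤ 1) := ⟨zero_le_one⟩

/-- A rule of a normal logic program: head atom, positive body atoms, default-negated body atoms. -/
structure Rule (α : Type) where
  head : α
  pos : Finset α
  neg : Finset α
deriving DecidableEq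

/-- A t-norm on the unit interval: commutative, associative, monotone in each argument,
with unit `1`. -/
structure Tnorm where
  f : unitInterval → unitInterval → unitInterval
  comm : ∀ x y, f x y = f y x
  assoc : ∀ x y z, f (f x y) z = f x (f y z)
  mono : ∀ ⦃x x' y y'⦄, x ≤ x' → y ≤ y' → f x y ≤ f x' y'
  one_left : ∀ x, f 1 x = x

/-- A t-conorm on the unit interval: commutative, associative, monotone in each argument,
with unit `0`. -/
structure Tconorm where
  f : unitInterval → unitInterval → unitInterval
  comm : ∀ x y, f x y = f y x
  assoc : ∀ x y z, f (f x y) z = f x (f y z)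
  mono : ∀ ⦃x x' y y'⦄, x ≤ x' → y ≤ y' → f x y ≤ f x' y'
  zero_left : ∀ x, f 0 x = x

instance (t : Tnorm) : Std.Commutative t.f := ⟨t.comm⟩
instance (t : Tnorm) : Std.Associative t.f := ⟨t.assoc⟩
instance (s : Tconorm) : Std.Commutative s.f := ⟨s.comm⟩
instance (s : Tconorm) : Std.Associative s.f := ⟨s.assoc⟩

/-- ⊗-product of `g` over a finite set (empty product = `1`). -/
def tnormProd {β : Type} (t : Tnorm) (g : β → unitInterval) (s : Finset β) : unitInterval :=
  s.fold t.f 1 g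

/-- ⊕-sum of `g` over a finite set (empty sum = `0`). -/
def tconormSum {β : Type} (s : Tconorm) (g : β → unitInterval) (q : Finset β) : unitInterval :=
  q.fold s.f 0 g

/-- Support `ρ(τ,φ)` of a rule: the ⊗-product of the values of all its body literals,
where `val(a) = τ a` and `val(not a) = φ a`. -/
def support {α : Type} (t : Tnorm) (τ φ : α → unitInterval) (r : Rule α) : unitInterval :=
  t.f (tnormProd t τ r.pos) (tnormProd t φ r.neg)

/-- The soft immediate consequence operator `𝒞_{P,φ}(τ)`: for each atom `a`, the ⊕-sum of
the supports of all rules with head `a`. -/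
def softC {α : Type} [DecidableEq α] (t : Tnorm) (s : Tconorm) (P : Finset (Rule α))
    (φ τ : α → unitInterval) : α → unitInterval :=
  fun a => tconormSum s (support t τ φ) (P.filter fun r => r.head = a)

/-- The set induced by a degree vector: `[ψ] = { a | ψ a = 1 }`. -/
def induced {α : Type} (ψ : α → unitInterval) : Set α := { a | ψ a = 1 }

/-- The classical immediate consequence operator `C_{P,J}(I)`. -/
def imCons {α : Type} (P : Finset (Rule α)) (J I : Set α) : Set α :=
  { a | ∃ r ∈ P, r.head = a ∧ ↑r.pos ⊆ I ∧ ∀ b ∈ r.neg, b ∉ J }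

/-!
A t-norm lies below both of its arguments, so a ⊗-product equals `1` exactly when all its factors
do: a rule has support `1` iff its body holds classically, for arbitrary degrees. A t-conorm such as
`min (x + y) 1` can reach `1` on two arguments below `1`, but a t-conorm with one argument in
`{0, 1}` cannot. So `[𝒞_{P,φ}(τ)]` is the classical set of consequences as soon as all supports are
binary, which binary `τ` and `φ` ensure.
-/

namespace Tnorm

variable (t : Tnorm) {x y : unitInterval}

theorem le_left (x y : unitInterval) : t.f x y ≤ x :=
  calc
    t.f x y ≤ t.f x 1 := t.mono le_rfl unitInterval.le_one'
    _ = x := by rw [t.comm, t.one_left]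

theorem le_right (x y : unitInterval) : t.f x y ≤ y :=
  t.comm x y ▸ t.le_left y x

theorem zero_left (x : unitInterval) : t.f 0 x = 0 :=
  le_antisymm (t.le_left 0 x) unitInterval.nonneg'

theorem eq_one_iff : t.f x y = 1 ↔ x = 1 ∧ y = 1 := by
  constructor
  · intro h
    exact ⟨le_antisymm unitInterval.le_one' (h ▸ t.le_left x y),
      le_antisymm unitInterval.le_one' (h ▸ t.le_right x y)⟩
  · rintro ⟨rfl, rfl⟩
    exact t.one_left 1

theorem eq_zero_or_one (hx : x = 0 ∨ x = 1) (hy : y = 0 ∨ y = 1) :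
    t.f x y = 0 ∨ t.f x y = 1 := by
  rcases hx with rfl | rfl
  · exact .inl (t.zero_left y)
  · rwa [t.one_left]

end Tnorm

namespace Tconorm

variable (s : Tconorm) {x y : unitInterval}

theorem one_left (x : unitInterval) : s.f 1 x = 1 := by
  refine le_antisymm unitInterval.le_one' ?_
  calc
    1 = s.f 1 0 := by rw [s.comm, s.zero_left]
    _ ≤ s.f 1 x := s.mono le_rfl unitInterval.nonneg'

theorem eq_one_iff_of_left (hx : x = 0 ∨ x = 1) : s.f x y = 1 ↔ x = 1 ∨ y = 1 := by
  rcases hx with rfl | rfl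
  · simp [s.zero_left]
  · simp [s.one_left]

end Tconorm

section FiniteFolds

variable {β : Type} {g : β → unitInterval} {q : Finset β}

theorem tnormProd_eq_one_iff (t : Tnorm) : tnormProd t g q = 1 ↔ ∀ b ∈ q, g b = 1 :=
  (Finset.fold_op_rel_iff_and (r := fun _ y => y = 1) t.eq_one_iff (c := 1)).trans
    (and_iff_right rfl)

theorem tnormProd_eq_zero_or_one (t : Tnorm) (hg : ∀ b ∈ q, g b = 0 ∨ g b = 1) :
    tnormProd t g q = 0 ∨ tnormProd t g q = 1 := by
  induction q using Finset.cons_induction with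
  | empty => exact .inr rfl
  | cons b q hb ih =>
    rw [Finset.forall_mem_cons] at hg
    rw [tnormProd, Finset.fold_cons]
    exact t.eq_zero_or_one hg.1 (ih hg.2)

theorem tconormSum_eq_one_iff (s : Tconorm) (hg : ∀ b ∈ q, g b = 0 ∨ g b = 1) :
    tconormSum s g q = 1 ↔ ∃ b ∈ q, g b = 1 := by
  induction q using Finset.cons_induction with
  | empty => simp [tconormSum]
  | cons b q hb ih =>
    rw [Finset.forall_mem_cons] at hg
    rw [tconormSum, Finset.fold_cons, s.eq_one_iff_of_left hg.1, ← tconormSum, ih hg.2]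
    simp only [Finset.mem_cons, exists_eq_or_imp]

end FiniteFolds

section Consequences

variable {α : Type} {τ φ : α → unitInterval}

theorem support_eq_one_iff (t : Tnorm) {r : Rule α} :
    support t τ φ r = 1 ↔ (∀ b ∈ r.pos, τ b = 1) ∧ ∀ b ∈ r.neg, φ b = 1 := by
  rw [support, t.eq_one_iff, tnormProd_eq_one_iff, tnormProd_eq_one_iff]

theorem support_eq_zero_or_one (t : Tnorm) {r : Rule α} (hτ : ∀ b ∈ r.pos, τ b = 0 ∨ τ b = 1)
    (hφ : ∀ b ∈ r.neg, φ b = 0 ∨ φ b = 1) : support t τ φ r = 0 ∨ support t τ φ r = 1 :=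
  t.eq_zero_or_one (tnormProd_eq_zero_or_one t hτ) (tnormProd_eq_zero_or_one t hφ)

theorem mem_imCons_induced_iff_exists_support_eq_one (t : Tnorm) {P : Finset (Rule α)} {a : α} :
    a ∈ imCons P (Set.univ \ induced φ) (induced τ) ↔
      ∃ r ∈ P, r.head = a ∧ support t τ φ r = 1 := by
  simp [imCons, induced, support_eq_one_iff, Set.subset_def]

theorem mem_induced_softC_iff_exists_support_eq_one [DecidableEq α] (t : Tnorm) (s : Tconorm)
    {P : Finset (Rule α)} {a : α}
    (h : ∀ r ∈ P, r.head = a → support t τ φ r = 0 ∨ support t τ φ r = 1) :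
    a ∈ induced (softC t s P φ τ) ↔ ∃ r ∈ P, r.head = a ∧ support t τ φ r = 1 := by
  have support_binary :
      ∀ r ∈ P.filter (·.head = a), support t τ φ r = 0 ∨ support t τ φ r = 1 := by
    simpa only [Finset.mem_filter, and_imp] using h
  change tconormSum s _ _ = 1 ↔ _
  rw [tconormSum_eq_one_iff s support_binary]
  simp only [Finset.mem_filter, and_assoc]

theorem crisp_softC_eq_imCons_general [DecidableEq α] (t : Tnorm) (s : Tconorm)
    (P : Finset (Rule α)) (τ φ : α → unitInterval)
    (h : ∀ r ∈ P, support t τ φ r = 0 ∨ support t τ φ r = 1) :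
    induced (softC t s P φ τ) = imCons P (Set.univ \ induced φ) (induced τ) := by
  ext a
  rw [mem_induced_softC_iff_exists_support_eq_one t s fun r hr _ => h r hr,
    mem_imCons_induced_iff_exists_support_eq_one t]

end Consequences

/-- For binary degree vectors `τ, φ`, the set induced by one application
of the soft immediate consequence operator equals one application of the classical
immediate consequence operator: `[𝒞_{P,φ}(τ)] = C_{P,𝒜∖F}(T)` with `T = [τ]`, `F = [φ]`. -/
theorem crisp_softC_eq_imCons {α : Type} [Fintype α] [DecidableEq α]
    (t : Tnorm) (s : Tconorm) (P : Finset (Rule α)) (τ φ : α → unitInterval)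
    (hτ : ∀ a, τ a = 0 ∨ τ a = 1) (hφ : ∀ a, φ a = 0 ∨ φ a = 1) :
    induced (softC t s P φ τ) = imCons P (Set.univ \ induced φ) (induced τ) :=
  crisp_softC_eq_imCons_general t s P τ φ fun _ _ =>
    support_eq_zero_or_one t (fun a _ => hτ a) fun a _ => hφ a
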